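/- Fix λ ∈ ℝ with λ ≠ 0, and let I_λ be the group of affine transformations of ℝ³ consisting of the maps g_{s,t,u} with linear part [[1, λ·e^s·u, λ·e^{−s}·t],[0, e^s, 0],[0, 0, e^{−s}]] and vector part (s + λ·u·t, t, u), for (s,t,u) ∈ ℝ³. Let Γ be a group of affine transformations of ℝ³ whose linear parts all lie in GL₃(ℤ), and suppose there is an invertible affine transformation φ of ℝ³ such that φΓφ⁻¹ is a subgroup of I_λ whose parameter set {(s,t,u) ∈ ℝ³ : g_{s,t,u} ∈ φΓφ⁻¹} is a discrete subset of ℝ³, and suppose the orbit space ℝ³/Γ is compact. Then there exist P ∈ GL₃(ℤ) and w ∈ ℝ³ such that, after conjugating Γ by the affine map x ↦ P x + w, the group Γ is generated by three elements g = ([[1,p,q],[0,a,b],[0,c,d]], (x₁,y₁,z₁)), h₁ = ([[1,a₁,0],[0,1,0],[0,0,1]], (x₂,y₂,z₂)), h₂ = ([[1,0,n·a₁],[0,1,0],[0,0,1]], (x₃,y₃,z₃)), where p,q,a,b,c,d ∈ ℤ, a₁ and n are positive integers, and diag(a₁, n·a₁)·[[a,b],[c,d]] = A·diag(a₁, n·a₁)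 for some A ∈ SL₂(ℤ). -/

import Mathlib

open Matrix

noncomputable section

/-- ℝ³ as the space of triples of reals. -/
abbrev E3 : Type := Fin 3 → ℝ

/-- The group of invertible affine transformations of ℝ³. -/
abbrev AffT : Type := E3 ≃ᵃ[ℝ] E3

/-- `γ` is the affine transformation `x ↦ A x + v` with linear part `A` and vector part `v`. -/
def HasForm (γ : AffT) (A : Matrix (Fin 3) (Fin 3) ℝ) (v : E3) : Prop :=
  ∀ x, γ x = A.mulVec x + v

/-- `γ` is the pure translation by the vector `v`. -/
def IsTranslationBy (γ : AffT) (v : E3) : Prop :=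
  ∀ x, γ x = x + v

/-- The group `Γ` acts freely on ℝ³. -/
def IsFreeAction (Γ : Subgroup AffT) : Prop :=
  ∀ γ ∈ Γ, (∃ x : E3, γ x = x) → γ = 1

/-- The group `Γ` acts properly discontinuously on ℝ³. -/
def IsProperlyDiscontinuous (Γ : Subgroup AffT) : Prop :=
  ∀ K L : Set E3, IsCompact K → IsCompact L →
    {γ : AffT | γ ∈ Γ ∧ ((γ '' K) ∩ L).Nonempty}.Finite

/-- The orbit equivalence relation of `Γ` on ℝ³. -/
def orbitSetoid (Γ : Subgroup AffT) : Setoid E3 where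
  r x y := ∃ γ ∈ Γ, γ x = y
  iseqv := by
    constructor
    · intro x; exact ⟨1, Γ.one_mem, rfl⟩
    · rintro x y ⟨γ, hγ, h⟩
      exact ⟨γ⁻¹, Γ.inv_mem hγ, by rw [← h]; exact γ.symm_apply_apply x⟩
    · rintro x y z ⟨γ, hγ, h⟩ ⟨δ, hδ, h'⟩
      exact ⟨δ * γ, Γ.mul_mem hδ hγ, by simp [← h', ← h]⟩

/-- The orbit space `ℝ³/Γ`, equipped with the quotient topology, is compact. -/
def HasCompactQuotient (Γ : Subgroup AffT) : Prop :=
  CompactSpace (Quotient (orbitSetoid Γ))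

/-- The affine transformation `g_{s,t,u}` of the family `I_λ`. -/
def Ifam (lam s t u : ℝ) : E3 → E3 := fun x =>
  (!![1, lam * Real.exp s * u, lam * Real.exp (-s) * t;
      0, Real.exp s, 0;
      0, 0, Real.exp (-s)]).mulVec x + ![s + lam * u * t, t, u]

set_option linter.unusedSimpArgs false

def MI (lam s t u : ℝ) : Matrix (Fin 3) (Fin 3) ℝ :=
  !![1, lam * Real.exp s * u, lam * Real.exp (-s) * t; 0, Real.exp s, 0; 0, 0, Real.exp (-s)]

def RI (lam : ℝ) (φ γ : AffT) (s t u : ℝ) : Prop := ∀ x, φ (γ x) = Ifam lam s t u (φ x)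

theorem form_unique {A A' : Matrix (Fin 3) (Fin 3) ℝ} {v v' : E3}
    (h : ∀ x, A.mulVec x + v = A'.mulVec x + v') : A = A' ∧ v = v' := by
  have h0 : v = v' := by simpa using h 0
  refine ⟨?_, h0⟩
  apply Matrix.mulVec_injective
  funext x
  have := h x
  rw [h0] at this
  exact add_right_cancel this

theorem HasForm.eq {γ : AffT} {A A' : Matrix (Fin 3) (Fin 3) ℝ} {v v' : E3}
    (h : HasForm γ A v) (h' : HasForm γ A' v') : A = A' ∧ v = v' :=
  form_unique fun x => by rw [← h x, ← h' x]

theorem HasForm.mul {γ δ : AffT} {A A' : Matrix (Fin 3) (Fin 3) ℝ} {v v' : E3}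
    (h : HasForm γ A v) (h' : HasForm δ A' v') :
    HasForm (γ * δ) (A * A') (A.mulVec v' + v) := by
  intro x
  change γ (δ x) = _
  rw [h' x, h, Matrix.mulVec_add, Matrix.mulVec_mulVec, add_assoc]

theorem HasForm.one : HasForm 1 1 0 := by
  intro x
  change x = _
  simp

theorem exists_form (γ : AffT) : ∃ A v, HasForm γ A v := by
  refine ⟨LinearMap.toMatrix' (γ.linear : E3 →ₗ[ℝ] E3), γ 0, fun x => ?_⟩
  rw [LinearMap.toMatrix'_mulVec]
  have := γ.map_vadd 0 x
  simpa using this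

theorem exists_form_unit (γ : AffT) : ∃ A v, HasForm γ A v ∧ A.det ≠ 0 := by
  obtain ⟨A, v, h⟩ := exists_form γ
  obtain ⟨A', v', h'⟩ := exists_form γ⁻¹
  refine ⟨A, v, h, fun h0 => ?_⟩
  have h2 := (h.mul h')
  rw [mul_inv_cancel] at h2
  have := (h2.eq HasForm.one).1
  have := congrArg Matrix.det this
  rw [Matrix.det_mul, h0] at this
  simp at this

theorem RI.mat {lam : ℝ} {φ γ : AffT} {s t u : ℝ} (h : RI lam φ γ s t u)
    {Φ B : Matrix (Fin 3) (Fin 3) ℝ} {w v : E3} (hφ : HasForm φ Φ w) (hγ : HasForm γ B v) :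
    Φ * B = MI lam s t u * Φ := by
  refine (form_unique (v := Φ.mulVec v + w) 
    (v' := (MI lam s t u).mulVec w + ![s + lam * u * t, t, u]) fun x => ?_).1
  have h1 := h x
  rw [hφ, hγ, hφ] at h1
  unfold Ifam at h1
  rw [← Matrix.mulVec_mulVec, ← Matrix.mulVec_mulVec, ← add_assoc, ← Matrix.mulVec_add, h1,
    ← add_assoc, ← Matrix.mulVec_add]
  rfl

theorem Ifam_comp (lam s t u s' t' u' : ℝ) (x : E3) :
    Ifam lam s t u (Ifam lam s' t' u' x) =
      Ifam lam (s + s') (Real.exp s * t' + t) (Real.exp (-s) * u' + u) x := by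
  have e1 : Real.exp (-s) = (Real.exp s)⁻¹ := Real.exp_neg s
  have e2 : Real.exp (-s') = (Real.exp s')⁻¹ := Real.exp_neg s'
  have e3 : Real.exp (-(s + s')) = (Real.exp s)⁻¹ * (Real.exp s')⁻¹ := by
    rw [Real.exp_neg, Real.exp_add, mul_inv]
  have p1 := (Real.exp_pos s).ne'
  have p2 := (Real.exp_pos s').ne'
  funext i
  fin_cases i <;>
  simp [Ifam, Matrix.mulVec, dotProduct, Fin.sum_univ_three, e1, e2, e3, Real.exp_add] <;>
  field_simp <;> ring

theorem Ifam_zero (lam : ℝ) (x : E3) : Ifam lam 0 0 0 x = x := by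
  funext i
  fin_cases i <;>
  simp [Ifam, Matrix.mulVec, dotProduct, Fin.sum_univ_three]

theorem RI.mul {lam : ℝ} {φ γ δ : AffT} {s t u s' t' u' : ℝ} (h : RI lam φ γ s t u)
    (h' : RI lam φ δ s' t' u') :
    RI lam φ (γ * δ) (s + s') (Real.exp s * t' + t) (Real.exp (-s) * u' + u) := by
  intro x
  change φ (γ (δ x)) = _
  rw [h, h', Ifam_comp]

theorem RI.one {lam : ℝ} {φ : AffT} : RI lam φ 1 0 0 0 := by
  intro x
  rw [Ifam_zero]; rfl

theorem RI.uniq {lam : ℝ} {φ γ : AffT} {s t u s' t' u' : ℝ} (h : RI lam φ γ s t u)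
    (h' : RI lam φ γ s' t' u') : s = s' ∧ t = t' ∧ u = u' := by
  have h1 := h (φ⁻¹ 0)
  rw [h' (φ⁻¹ 0)] at h1
  have h2 : φ (φ⁻¹ 0) = 0 := φ.apply_symm_apply 0
  rw [h2] at h1
  have a0 := congrFun h1 0
  have a1 := congrFun h1 1
  have a2 := congrFun h1 2
  simp [Ifam] at a0 a1 a2
  subst a1 a2
  simp at a0
  exact ⟨a0.symm, rfl, rfl⟩

theorem RI.eq_one {lam : ℝ} {φ γ : AffT} (h : RI lam φ γ 0 0 0) : γ = 1 := by
  ext1 x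
  have := h x
  rw [Ifam_zero] at this
  exact φ.injective this

theorem RI.s_inv {lam : ℝ} {φ γ : AffT} {s t u s' t' u' : ℝ} (h : RI lam φ γ s t u)
    (h' : RI lam φ γ⁻¹ s' t' u') : s' = -s := by
  have := h.mul h'
  rw [mul_inv_cancel] at this
  have := (this.uniq RI.one).1
  linarith

theorem mk_aff (P P' : Matrix (Fin 3) (Fin 3) ℝ) (h : P * P' = 1) :
    ∃ ψ : AffT, HasForm ψ P 0 ∧ HasForm ψ⁻¹ P' 0 := by
  have h' : P' * P = 1 := mul_eq_one_comm.mp h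
  refine ⟨(Matrix.toLin'OfInv h' h).toAffineEquiv, fun x => ?_, fun x => ?_⟩
  · rw [add_zero]; rfl
  · rw [add_zero]; rfl

/-- The system derived from the hypotheses. -/
structure Sys (lam : ℝ) (Γ : Subgroup AffT) (φ : AffT) : Prop where
  hint : ∀ γ ∈ Γ, ∃ B : Matrix (Fin 3) (Fin 3) ℤ, IsUnit B ∧
      ∃ v : E3, HasForm γ (B.map (Int.cast : ℤ → ℝ)) v
  hR : ∀ γ ∈ Γ, ∃ s t u, RI lam φ γ s t u
  gen : ∃ g ∈ Γ, ∃ s₀ t₀ u₀, RI lam φ g s₀ t₀ u₀ ∧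
    ∀ γ ∈ Γ, ∀ s t u, RI lam φ γ s t u → ∃ k : ℤ, s = k * s₀
  ind : ∃ ν ∈ Γ, ∃ ν' ∈ Γ, ∃ t u t' u', RI lam φ ν 0 t u ∧ RI lam φ ν' 0 t' u' ∧
    t * u' - t' * u ≠ 0

theorem exists_compact {Γ : Subgroup AffT} (hcomp : HasCompactQuotient Γ) :
    ∃ K : Set E3, IsCompact K ∧ ∀ x, ∃ γ ∈ Γ, ∃ k ∈ K, γ k = x := by
  unfold HasCompactQuotient at hcomp
  let π : E3 → Quotient (orbitSetoid Γ) := Quotient.mk _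
  have hop : ∀ U : Set E3, IsOpen U → IsOpen (π '' U) := by
    intro U hU
    have hq : Topology.IsQuotientMap π := isQuotientMap_quot_mk
    rw [← hq.isOpen_preimage]
    have : π ⁻¹' (π '' U) = ⋃ γ ∈ Γ, (fun x => γ x) ⁻¹' U := by
      ext x
      simp only [Set.mem_preimage, Set.mem_image, Set.mem_iUnion, exists_prop]
      constructor
      · rintro ⟨y, hy, hxy⟩
        obtain ⟨γ, hγ, h⟩ := Quotient.exact hxy.symm
        exact ⟨γ, hγ, by rw [h]; exact hy⟩
      · rintro ⟨γ, hγ, h⟩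
        exact ⟨γ x, h, (Quotient.sound (s := orbitSetoid Γ) ⟨γ, hγ, rfl⟩).symm⟩
    rw [this]
    refine isOpen_biUnion fun γ _ => hU.preimage ?_
    exact AffineMap.continuous_of_finiteDimensional (γ : E3 →ᵃ[ℝ] E3)
  obtain ⟨n, hn⟩ := isCompact_univ.elim_directed_cover (fun n : ℕ => π '' Metric.ball 0 n)
    (fun n => hop _ Metric.isOpen_ball) (by
      intro q _
      induction q using Quotient.inductionOn with
      | h x =>
      obtain ⟨n, hn⟩ := exists_nat_gt ‖x‖
      exact Set.mem_iUnion.2 ⟨n, x, by simpa using hn, rfl⟩)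
    (by
      apply Monotone.directed_le
      intro m n hmn
      exact Set.image_mono (Metric.ball_subset_ball (by exact_mod_cast hmn)))
  refine ⟨Metric.closedBall 0 n, isCompact_closedBall _ _, fun x => ?_⟩
  obtain ⟨k, hk, hkx⟩ := hn (Set.mem_univ (π x))
  obtain ⟨γ, hγ, h⟩ := Quotient.exact hkx
  exact ⟨γ, hγ, k, Metric.ball_subset_closedBall hk, h⟩

theorem trace_s {lam : ℝ} {φ γ : AffT} {s t u : ℝ} (h : RI lam φ γ s t u)
    {B : Matrix (Fin 3) (Fin 3) ℤ} {v : E3} (hB : HasForm γ (B.map (Int.cast : ℤ → ℝ)) v) :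
    (B.trace : ℝ) = 1 + Real.exp s + Real.exp (-s) := by
  obtain ⟨Φ, w, hφ, hd⟩ := exists_form_unit φ
  have h1 := h.mat hφ hB
  have hu : IsUnit Φ.det := isUnit_iff_ne_zero.2 hd
  have h2 : B.map (Int.cast : ℤ → ℝ) = Φ⁻¹ * (MI lam s t u * Φ) := by
    rw [← h1, ← mul_assoc, Matrix.nonsing_inv_mul _ hu, one_mul]
  have h3 := congrArg Matrix.trace h2
  rw [Matrix.trace_mul_comm, mul_assoc, Matrix.mul_nonsing_inv _ hu, mul_one] at h3
  simp [Matrix.trace, Fin.sum_univ_three, MI] at h3 ⊢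
  linarith

theorem no_small {lam : ℝ} {φ γ : AffT} {s t u : ℝ} (h : RI lam φ γ s t u)
    {B : Matrix (Fin 3) (Fin 3) ℤ} {v : E3} (hB : HasForm γ (B.map (Int.cast : ℤ → ℝ)) v)
    (h0 : 0 < s) (h1 : s < Real.log 2) : False := by
  have ht := trace_s h hB
  rw [Real.exp_neg] at ht
  have e1 : 1 < Real.exp s := Real.one_lt_exp_iff.2 h0
  have e2 : Real.exp s < 2 := by
    rwa [← Real.lt_log_iff_exp_lt (by norm_num)]
  have l1 : (3 : ℝ) < B.trace := by
    rw [ht]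
    have : Real.exp s + (Real.exp s)⁻¹ - 2 = (Real.exp s - 1) ^ 2 / Real.exp s := by
      field_simp; ring
    have : 0 < (Real.exp s - 1) ^ 2 / Real.exp s := by
      apply div_pos _ (by linarith)
      apply pow_pos; linarith
    linarith
  have l2 : (B.trace : ℝ) < 4 := by
    rw [ht]
    have : (Real.exp s)⁻¹ < 1 := inv_lt_one_of_one_lt₀ e1
    linarith
  have l1' : 3 < B.trace := by exact_mod_cast l1
  have l2' : B.trace < 4 := by exact_mod_cast l2
  omega

theorem sub_det {lam : ℝ} {φ γ : AffT} {s t u : ℝ} (h : RI lam φ γ s t u)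
    {B : Matrix (Fin 3) (Fin 3) ℝ} {v : E3} (hB : HasForm γ B v) : B.det = 1 := by
  obtain ⟨Φ, w, hφ, hd⟩ := exists_form_unit φ
  have h1 := congrArg Matrix.det (h.mat hφ hB)
  rw [Matrix.det_mul, Matrix.det_mul] at h1
  have : (MI lam s t u).det = 1 := by
    simp [MI, Matrix.det_fin_three, ← Real.exp_add]
  rw [this, mul_comm] at h1
  exact mul_right_cancel₀ hd h1

theorem Ifam_inv (lam s t u : ℝ) (y : E3) :
    (Ifam lam s t u y) 0 - lam * (Ifam lam s t u y) 1 * (Ifam lam s t u y) 2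
      = y 0 - lam * y 1 * y 2 + s := by
  have e1 : Real.exp (-s) = (Real.exp s)⁻¹ := Real.exp_neg s
  have p1 := (Real.exp_pos s).ne'
  simp [Ifam, Matrix.mulVec, dotProduct, Fin.sum_univ_three, e1]
  field_simp
  ring

theorem bdd_on {K : Set E3} (hK : IsCompact K) (f : E3 → ℝ) (hf : Continuous f) :
    ∃ C, ∀ x ∈ K, |f x| ≤ C := by
  obtain ⟨C, hC⟩ := hK.exists_bound_of_continuousOn hf.continuousOn
  exact ⟨C, fun x hx => by simpa using hC x hx⟩

theorem aff_cont (γ : AffT) : Continuous γ :=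
  AffineMap.continuous_of_finiteDimensional (γ : E3 →ᵃ[ℝ] E3)

theorem exists_gen {lam : ℝ} {Γ : Subgroup AffT} {φ : AffT}
    (hint : ∀ γ ∈ Γ, ∃ B : Matrix (Fin 3) (Fin 3) ℤ, IsUnit B ∧
      ∃ v : E3, HasForm γ (B.map (Int.cast : ℤ → ℝ)) v)
    (hR : ∀ γ ∈ Γ, ∃ s t u, RI lam φ γ s t u)
    {K : Set E3} (hK : IsCompact K) (hcov : ∀ x, ∃ γ ∈ Γ, ∃ k ∈ K, γ k = x) :
    ∃ g ∈ Γ, ∃ s₀ t₀ u₀, s₀ ≠ 0 ∧ RI lam φ g s₀ t₀ u₀ ∧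
    ∀ γ ∈ Γ, ∀ s t u, RI lam φ γ s t u → ∃ k : ℤ, s = k * s₀ := by
  let H : AddSubgroup ℝ :=
    { carrier := {s | ∃ γ ∈ Γ, ∃ t u, RI lam φ γ s t u}
      zero_mem' := ⟨1, Γ.one_mem, 0, 0, RI.one⟩
      add_mem' := by
        rintro s s' ⟨γ, hγ, t, u, h⟩ ⟨γ', hγ', t', u', h'⟩
        exact ⟨γ * γ', Γ.mul_mem hγ hγ', _, _, h.mul h'⟩
      neg_mem' := by
        rintro s ⟨γ, hγ, t, u, h⟩
        obtain ⟨s', t', u', h'⟩ := hR γ⁻¹ (Γ.inv_mem hγ)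
        have := h.s_inv h'
        subst this
        exact ⟨γ⁻¹, Γ.inv_mem hγ, t', u', h'⟩ }
  have hHm : ∀ s, s ∈ H ↔ ∃ γ ∈ Γ, ∃ t u, RI lam φ γ s t u := fun s => Iff.rfl
  obtain ⟨b, hb⟩ := AddSubgroup.cyclic_of_isolated_zero (H := H)
    (Real.log_pos (by norm_num : (1:ℝ) < 2)) (by
      rw [Set.disjoint_left]
      rintro s ⟨γ, hγ, t, u, h⟩ ⟨h0, h1⟩
      obtain ⟨B, _, v, hB⟩ := hint γ hγ
      exact no_small h hB h0 h1)
  have hbH : b ∈ H := by rw [hb]; exact AddSubgroup.mem_closure_singleton_self b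
  obtain ⟨g, hg, t₀, u₀, hgR⟩ := (hHm b).1 hbH
  refine ⟨g, hg, b, t₀, u₀, ?_, hgR, ?_⟩
  · rintro rfl
    obtain ⟨C, hC⟩ := bdd_on hK (fun x => (φ x) 0 - lam * (φ x) 1 * (φ x) 2) (by
      have := aff_cont φ
      fun_prop)
    obtain ⟨γ, hγ, k, hk, hx⟩ := hcov (φ⁻¹ ![C + 1, 0, 0])
    obtain ⟨s, t, u, h⟩ := hR γ hγ
    have hs : s ∈ H := (hHm s).2 ⟨γ, hγ, t, u, h⟩
    have hs0 : s = 0 := by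
      rw [hb, AddSubgroup.mem_closure_singleton] at hs
      obtain ⟨k, hk⟩ := hs
      rw [← hk]; simp
    have h1 := h k
    have h2 : φ (φ⁻¹ ![C + 1, 0, 0]) = ![C + 1, 0, 0] := φ.apply_symm_apply _
    have h3 := Ifam_inv lam s t u (φ k)
    rw [← h1, hx, h2, hs0] at h3
    have h4 := hC k hk
    simp only [add_zero] at h3
    rw [← h3] at h4
    simp at h4
    linarith [le_abs_self (C + 1)]
  · intro γ hγ s t u h
    have hs : s ∈ H := (hHm s).2 ⟨γ, hγ, t, u, h⟩
    rw [hb, AddSubgroup.mem_closure_singleton] at hs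
    obtain ⟨k, hk⟩ := hs
    exact ⟨k, by rw [← hk]; simp⟩

theorem RI.zpow_s {lam : ℝ} {Γ : Subgroup AffT} {φ : AffT}
    (hR : ∀ γ ∈ Γ, ∃ s t u, RI lam φ γ s t u) {g : AffT} (hg : g ∈ Γ) {s₀ t₀ u₀ : ℝ}
    (h : RI lam φ g s₀ t₀ u₀) (k : ℤ) : ∃ t u, RI lam φ (g ^ k) (k * s₀) t u := by
  have hn : ∀ n : ℕ, ∃ t u, RI lam φ (g ^ n) (n * s₀) t u := by
    intro n
    induction n with
    | zero => exact ⟨0, 0, by simpa using RI.one⟩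
    | succ n ih =>
      obtain ⟨t, u, ih⟩ := ih
      refine ⟨Real.exp (n * s₀) * t₀ + t, Real.exp (-(n * s₀)) * u₀ + u, ?_⟩
      have := ih.mul h
      rw [← pow_succ] at this
      convert this using 1
      push_cast; ring
  obtain ⟨n, rfl | rfl⟩ := k.eq_nat_or_neg
  · simpa using hn n
  · obtain ⟨t, u, h1⟩ := hn n
    obtain ⟨s', t', u', h2⟩ := hR (g ^ n)⁻¹ (Γ.inv_mem (Γ.pow_mem hg n))
    have := h1.s_inv h2
    refine ⟨t', u', ?_⟩
    rw [this] at h2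
    simpa using h2

theorem exists_nu {lam : ℝ} {Γ : Subgroup AffT} {φ : AffT}
    (hR : ∀ γ ∈ Γ, ∃ s t u, RI lam φ γ s t u)
    {K : Set E3} (hK : IsCompact K) (hcov : ∀ x, ∃ γ ∈ Γ, ∃ k ∈ K, γ k = x)
    {g : AffT} (hg : g ∈ Γ) {s₀ t₀ u₀ : ℝ} (hs₀ : s₀ ≠ 0) (hgR : RI lam φ g s₀ t₀ u₀)
    (hgen : ∀ γ ∈ Γ, ∀ s t u, RI lam φ γ s t u → ∃ k : ℤ, s = k * s₀)
    (α β : ℝ) (hab : 0 < α * α + β * β) :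
    ∃ ν ∈ Γ, ∃ t u, RI lam φ ν 0 t u ∧ α * t + β * u ≠ 0 := by
  by_contra! hcon
  have hφ := aff_cont φ
  obtain ⟨C, hC⟩ := bdd_on hK (fun x => (φ x) 0 - lam * (φ x) 1 * (φ x) 2) (by fun_prop)
  have hG : ∀ m : ℤ, ∃ C, ∀ x ∈ K,
      |α * (φ ((g ^ m : AffT) x)) 1 + β * (φ ((g ^ m : AffT) x)) 2| ≤ C := by
    intro m
    have := aff_cont (g ^ m)
    exact bdd_on hK (fun x => α * (φ ((g ^ m : AffT) x)) 1 + β * (φ ((g ^ m : AffT) x)) 2)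
      (by fun_prop)
  choose D hD using hG
  obtain ⟨N, hN⟩ := exists_nat_gt (C / |s₀|)
  obtain ⟨E, hE⟩ := ((Finset.Icc (-(N:ℤ)) N).image D).exists_le
  set y : ℝ := (E + 1) / (α * α + β * β) with hy
  obtain ⟨γ, hγ, k, hk, hx⟩ := hcov (φ⁻¹ ![lam * (y * α) * (y * β), y * α, y * β])
  have hφx : φ (γ k) = ![lam * (y * α) * (y * β), y * α, y * β] := by
    rw [hx]; exact φ.apply_symm_apply _
  obtain ⟨s, t, u, h⟩ := hR γ hγ
  obtain ⟨m, hm⟩ := hgen γ hγ s t u h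
  have h1 := Ifam_inv lam s t u (φ k)
  rw [← h k, hφx] at h1
  have hsC : |s| ≤ C := by
    have h2 := hC k hk
    have : s = -((φ k) 0 - lam * (φ k) 1 * (φ k) 2) := by
      simp at h1; linarith
    rw [this, abs_neg]; exact h2
  have hmN : |m| ≤ N := by
    have : |(m : ℝ)| * |s₀| ≤ C := by rw [← abs_mul, ← hm]; exact hsC
    have h3 : |(m : ℝ)| ≤ C / |s₀| := by
      rw [le_div_iff₀ (abs_pos.2 hs₀)]; exact this
    have h4 : |(m : ℝ)| < N := h3.trans_lt hN
    have h5 : |m| < (N : ℤ) := by exact_mod_cast h4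
    exact h5.le
  obtain ⟨tm, um, hmR⟩ := RI.zpow_s hR hg hgR m
  have hgm : g ^ m ∈ Γ := Γ.zpow_mem hg m
  have hν : γ * (g ^ m)⁻¹ ∈ Γ := Γ.mul_mem hγ (Γ.inv_mem hgm)
  obtain ⟨s', t', u', h'⟩ := hR _ hν
  have h6 := h'.mul hmR
  rw [inv_mul_cancel_right] at h6
  have h7 := (h6.uniq h).1
  have hs' : s' = 0 := by linarith
  subst hs'
  have h8 := hcon _ hν t' u' h'
  have h9 := h' ((g ^ m : AffT) k)
  have h10 : (γ * (g ^ m)⁻¹) ((g ^ m : AffT) k) = γ k := by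
    change (γ * (g ^ m)⁻¹ * g ^ m) k = γ k
    rw [inv_mul_cancel_right]
  rw [h10, hφx] at h9
  have a1 := congrFun h9 1
  have a2 := congrFun h9 2
  simp [Ifam, Matrix.mulVec, dotProduct, Fin.sum_univ_three] at a1 a2
  have hDm := hD m k hk
  have hEm : D m ≤ E := hE _ (Finset.mem_image_of_mem D (by
    rw [Finset.mem_Icc]; exact abs_le.1 hmN))
  have hy2 : y * (α * α + β * β) = E + 1 := by
    rw [hy]; exact div_mul_cancel₀ _ hab.ne'
  have : α * (φ ((g ^ m : AffT) k)) 1 + β * (φ ((g ^ m : AffT) k)) 2 = E + 1 := by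
    rw [← hy2]
    linear_combination (-α) * a1 + (-β) * a2 - h8
  rw [this] at hDm
  linarith [le_abs_self (E + 1)]

theorem mk_sys {lam : ℝ} {Γ : Subgroup AffT} {φ : AffT}
    (hint : ∀ γ ∈ Γ, ∃ B : Matrix (Fin 3) (Fin 3) ℤ, IsUnit B ∧
      ∃ v : E3, HasForm γ (B.map (Int.cast : ℤ → ℝ)) v)
    (hconj : ∀ γ ∈ Subgroup.map (MulAut.conj φ).toMonoidHom Γ,
      ∃ s t u : ℝ, ∀ x, γ x = Ifam lam s t u x)
    (hcomp : HasCompactQuotient Γ) : Sys lam Γ φ := by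
  have hR : ∀ γ ∈ Γ, ∃ s t u, RI lam φ γ s t u := by
    intro γ hγ
    obtain ⟨s, t, u, h⟩ := hconj _ (Subgroup.mem_map_of_mem _ hγ)
    refine ⟨s, t, u, fun x => ?_⟩
    rw [← h]
    change φ (γ x) = φ (γ (φ.symm (φ x)))
    rw [φ.symm_apply_apply]
  obtain ⟨K, hK, hcov⟩ := exists_compact hcomp
  obtain ⟨g, hg, s₀, t₀, u₀, hs₀, hgR, hgen⟩ := exists_gen hint hR hK hcov
  refine ⟨hint, hR, ⟨g, hg, s₀, t₀, u₀, hgR, hgen⟩, ?_⟩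
  obtain ⟨ν, hν, t, u, h, h1⟩ := exists_nu hR hK hcov hg hs₀ hgR hgen 1 0 (by norm_num)
  have ht : t ≠ 0 := by simpa using h1
  obtain ⟨ν', hν', t', u', h', h1'⟩ := exists_nu hR hK hcov hg hs₀ hgR hgen (-u) t (by
    have := mul_self_pos.2 ht
    nlinarith [mul_self_nonneg u])
  refine ⟨ν, hν, ν', hν', t, u, t', u', h, h', ?_⟩
  intro h0
  apply h1'
  linear_combination h0

theorem RI_conj {lam : ℝ} {φ γ : AffT} (ψ : AffT) {s t u : ℝ} :
    RI lam (φ * ψ⁻¹) (ψ * γ * ψ⁻¹) s t u ↔ RI lam φ γ s t u := by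
  have e : ∀ x, ψ⁻¹ (ψ x) = x := fun x => ψ.symm_apply_apply x
  have e' : ∀ x, ψ (ψ⁻¹ x) = x := fun x => ψ.apply_symm_apply x
  constructor
  · intro h x
    have := h (ψ x)
    change φ (ψ⁻¹ (ψ (γ (ψ⁻¹ (ψ x))))) = Ifam lam s t u (φ (ψ⁻¹ (ψ x))) at this
    simpa only [e] using this
  · intro h x
    change φ (ψ⁻¹ (ψ (γ (ψ⁻¹ x)))) = Ifam lam s t u (φ (ψ⁻¹ x))
    rw [e, h]

theorem map_mul_int (P P' : Matrix (Fin 3) (Fin 3) ℤ) :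
    P.map (Int.cast : ℤ → ℝ) * P'.map (Int.cast : ℤ → ℝ) = (P * P').map (Int.cast : ℤ → ℝ) :=
  (Matrix.map_mul (f := Int.castRingHom ℝ)).symm

theorem map_one_int {P P' : Matrix (Fin 3) (Fin 3) ℤ} (h : P * P' = 1) :
    P.map (Int.cast : ℤ → ℝ) * P'.map (Int.cast : ℤ → ℝ) = 1 := by
  rw [map_mul_int, h]; exact Matrix.map_one _ Int.cast_zero Int.cast_one

theorem Sys.conj {lam : ℝ} {Γ : Subgroup AffT} {φ : AffT} (S : Sys lam Γ φ)
    {P P' : Matrix (Fin 3) (Fin 3) ℤ} (hP : P * P' = 1) {ψ : AffT}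
    (hψ : HasForm ψ (P.map (Int.cast : ℤ → ℝ)) 0)
    (hψ' : HasForm ψ⁻¹ (P'.map (Int.cast : ℤ → ℝ)) 0) :
    Sys lam (Subgroup.map (MulAut.conj ψ).toMonoidHom Γ) (φ * ψ⁻¹) := by
  have hmem : ∀ {γ}, γ ∈ Γ → ψ * γ * ψ⁻¹ ∈ Subgroup.map (MulAut.conj ψ).toMonoidHom Γ :=
    fun h => Subgroup.mem_map_of_mem (MulAut.conj ψ).toMonoidHom h
  refine ⟨?_, ?_, ?_, ?_⟩
  · rintro _ ⟨γ, hγ, rfl⟩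
    obtain ⟨B, hB, v, h⟩ := S.hint γ hγ
    have h2 := (hψ.mul h).mul hψ'
    rw [map_mul_int, map_mul_int] at h2
    refine ⟨P * B * P', ?_, _, h2⟩
    exact ((IsUnit.of_mul_eq_one _ hP).mul hB).mul (IsUnit.of_mul_eq_one _ (mul_eq_one_comm.mp hP))
  · rintro _ ⟨γ, hγ, rfl⟩
    obtain ⟨s, t, u, h⟩ := S.hR γ hγ
    exact ⟨s, t, u, (RI_conj ψ).2 h⟩
  · obtain ⟨g, hg, s₀, t₀, u₀, hgR, hgen⟩ := S.gen
    refine ⟨_, hmem hg, s₀, t₀, u₀, (RI_conj ψ).2 hgR, ?_⟩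
    rintro _ ⟨γ, hγ, rfl⟩ s t u h
    exact hgen γ hγ s t u ((RI_conj ψ).1 h)
  · obtain ⟨ν, hν, ν', hν', t, u, t', u', h, h', hd⟩ := S.ind
    exact ⟨_, hmem hν, _, hmem hν', t, u, t', u', (RI_conj ψ).2 h, (RI_conj ψ).2 h', hd⟩

theorem bez (a b : ℤ) : ∃ x y z w g : ℤ, x * w - y * z = 1 ∧ x * a + y * b = g ∧
    z * a + w * b = 0 := by
  by_cases h : Int.gcd a b = 0
  · obtain ⟨rfl, rfl⟩ := Int.gcd_eq_zero_iff.1 h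
    exact ⟨1, 0, 0, 1, 0, by simp⟩
  · have hg : (Int.gcd a b : ℤ) ≠ 0 := by exact_mod_cast h
    obtain ⟨a', ha⟩ := Int.gcd_dvd_left a b
    obtain ⟨b', hb⟩ := Int.gcd_dvd_right a b
    have hbz := Int.gcd_eq_gcd_ab a b
    set g : ℤ := (Int.gcd a b : ℤ)
    refine ⟨Int.gcdA a b, Int.gcdB a b, -b', a', g, ?_, by linarith, ?_⟩
    · apply mul_left_cancel₀ hg
      linear_combination (-1) * hbz - Int.gcdA a b * ha - Int.gcdB a b * hb
    · linear_combination (-b') * ha + a' * hb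

theorem lemA (c : Fin 3 → ℤ) (hc : c ≠ 0) :
    ∃ P P' : Matrix (Fin 3) (Fin 3) ℤ, P * P' = 1 ∧ ∃ d : ℤ, d ≠ 0 ∧ P *ᵥ c = ![d, 0, 0] := by
  obtain ⟨x, y, z, w, g, h1, h2, h3⟩ := bez (c 1) (c 2)
  obtain ⟨x', y', z', w', d, h1', h2', h3'⟩ := bez (c 0) g
  have e1 : !![1, 0, 0; 0, x, y; 0, z, w] * !![1, 0, 0; 0, w, -y; 0, -z, x] = 1 := by
    ext i j
    fin_cases i <;> fin_cases j <;> simp [Matrix.mul_apply, Fin.sum_univ_three] <;>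
      first | linear_combination h1 | ring
  have e2 : !![x', y', 0; z', w', 0; 0, 0, 1] * !![w', -y', 0; -z', x', 0; 0, 0, 1] = 1 := by
    ext i j
    fin_cases i <;> fin_cases j <;> simp [Matrix.mul_apply, Fin.sum_univ_three] <;>
      first | linear_combination h1' | ring
  have hP : (!![x', y', 0; z', w', 0; 0, 0, 1] * !![1, 0, 0; 0, x, y; 0, z, w]) *
      (!![1, 0, 0; 0, w, -y; 0, -z, x] * !![w', -y', 0; -z', x', 0; 0, 0, 1]) = 1 := by
    rw [mul_assoc, ← mul_assoc _ _ !![w', -y', 0; -z', x', 0; 0, 0, 1], e1, one_mul, e2]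
  have k1 : !![1, 0, 0; 0, x, y; 0, z, w] *ᵥ c = ![c 0, g, 0] := by
    ext i
    fin_cases i <;> simp [Matrix.mulVec, dotProduct, Fin.sum_univ_three, h2, h3]
  have k2 : !![x', y', 0; z', w', 0; 0, 0, 1] *ᵥ ![c 0, g, 0] = ![d, 0, 0] := by
    ext i
    fin_cases i <;> simp [Matrix.mulVec, dotProduct, Fin.sum_univ_three, h2', h3']
  have hPc : (!![x', y', 0; z', w', 0; 0, 0, 1] * !![1, 0, 0; 0, x, y; 0, z, w]) *ᵥ c
      = ![d, 0, 0] := by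
    rw [← Matrix.mulVec_mulVec, k1, k2]
  refine ⟨_, _, hP, d, ?_, hPc⟩
  rintro rfl
  apply hc
  have := congrArg (fun v => (!![1, 0, 0; 0, w, -y; 0, -z, x] *
    !![w', -y', 0; -z', x', 0; 0, 0, 1]) *ᵥ v) hPc
  rw [Matrix.mulVec_mulVec, mul_eq_one_comm.mp hP, Matrix.one_mulVec] at this
  rw [this]
  have : (![0, 0, 0] : Fin 3 → ℤ) = 0 := by ext i; fin_cases i <;> rfl
  rw [this, Matrix.mulVec_zero]

theorem lemB (Λ : Submodule ℤ (Fin 2 → ℤ)) (r r' : Fin 2 → ℤ) (hr : r ∈ Λ) (hr' : r' ∈ Λ)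
    (hd : r 0 * r' 1 - r 1 * r' 0 ≠ 0) :
    ∃ Q Q' : Matrix (Fin 2) (Fin 2) ℤ, Q * Q' = 1 ∧ ∃ a₁ n : ℤ, 0 < a₁ ∧ 0 < n ∧
      ∀ r, r ∈ Λ ↔ ∃ i j : ℤ, r ᵥ* Q = ![i * a₁, j * (n * a₁)] := by
  have hli : LinearIndependent ℤ ![(⟨r, hr⟩ : Λ), ⟨r', hr'⟩] := by
    rw [LinearIndependent.pair_iff]
    intro s t hst
    have h0 := congrFun (congrArg Subtype.val hst) 0
    have h1 := congrFun (congrArg Subtype.val hst) 1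
    simp at h0 h1
    constructor
    · apply (mul_eq_zero.1 (?_ : s * (r 0 * r' 1 - r 1 * r' 0) = 0)).resolve_right hd
      linear_combination r' 1 * h0 - r' 0 * h1
    · apply (mul_eq_zero.1 (?_ : t * (r 0 * r' 1 - r 1 * r' 0) = 0)).resolve_right hd
      linear_combination r 0 * h1 - r 1 * h0
  have hrk : Module.finrank ℤ Λ = Module.finrank ℤ (Fin 2 → ℤ) := by
    apply le_antisymm (Submodule.finrank_le Λ)
    have := hli.fintype_card_le_finrank
    simpa using this
  obtain ⟨b, a, ab, hab⟩ := Submodule.exists_smith_normal_form_of_rank_eq (Pi.basisFun ℤ (Fin 2)) hrk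
  have hmem : ∀ r, r ∈ Λ ↔ ∃ α β : ℤ, r = (α * a 0) • b 0 + (β * a 1) • b 1 := by
    intro r
    rw [ab.mem_submodule_iff']
    constructor
    · rintro ⟨c, rfl⟩
      exact ⟨c 0, c 1, by simp [Fin.sum_univ_two, hab, mul_smul]⟩
    · rintro ⟨α, β, rfl⟩
      exact ⟨![α, β], by simp [Fin.sum_univ_two, hab, mul_smul]⟩
  have ha : ∀ i, a i ≠ 0 := by
    intro i h0
    have := ab.ne_zero i
    apply this
    ext1
    rw [hab, h0]; simp
  have hrepr : ∀ r, r = (b.repr r 0) • b 0 + (b.repr r 1) • b 1 := by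
    intro r
    have := b.sum_repr r
    rw [Fin.sum_univ_two] at this
    exact this.symm
  let T : Matrix (Fin 2) (Fin 2) ℤ := Matrix.of fun i => b i
  let W : Matrix (Fin 2) (Fin 2) ℤ := Matrix.of fun i j => b.repr (Pi.single i 1) j
  have hWT : W * T = 1 := by
    ext i j
    have := congrFun (hrepr (Pi.single i 1)) j
    simp [Matrix.mul_apply, Fin.sum_univ_two, W, T, Matrix.one_apply] at this ⊢
    rw [← this, Pi.single_apply]; simp [eq_comm]
  have hTW : T * W = 1 := mul_eq_one_comm.mp hWT
  have hT : ∀ x y : ℤ, x • b 0 + y • b 1 = ![x, y] ᵥ* T := by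
    intro x y
    ext j
    simp [Matrix.vecMul, dotProduct, Fin.sum_univ_two, T]
  have hg0 : Int.gcd (a 0) (a 1) ≠ 0 := by
    intro h
    exact ha 0 (Int.gcd_eq_zero_iff.1 h).1
  have hg : 0 < (Int.gcd (a 0) (a 1) : ℤ) := by exact_mod_cast Nat.pos_of_ne_zero hg0
  obtain ⟨a', haa⟩ := Int.gcd_dvd_left (a 0) (a 1)
  obtain ⟨b', hbb⟩ := Int.gcd_dvd_right (a 0) (a 1)
  have hbz := Int.gcd_eq_gcd_ab (a 0) (a 1)
  set g : ℤ := (Int.gcd (a 0) (a 1) : ℤ)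
  set x := Int.gcdA (a 0) (a 1)
  set y := Int.gcdB (a 0) (a 1)
  have hxy : a' * x + b' * y = 1 := by
    apply mul_left_cancel₀ hg.ne'
    linear_combination (-1) * hbz - x * haa - y * hbb
  have ha' : a' ≠ 0 := by rintro rfl; exact ha 0 (by rw [haa]; simp)
  have hb' : b' ≠ 0 := by rintro rfl; exact ha 1 (by rw [hbb]; simp)
  let U : Matrix (Fin 2) (Fin 2) ℤ := !![a', b'; -y, x]
  let V : Matrix (Fin 2) (Fin 2) ℤ := !![x, -b'; y, a']
  have hVU : V * U = 1 := by
    ext i j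
    fin_cases i <;> fin_cases j <;> simp [V, U, Matrix.mul_apply, Fin.sum_univ_two] <;>
      first | linear_combination hxy | ring
  have hUV : U * V = 1 := mul_eq_one_comm.mp hVU
  have key : ∀ r, r ∈ Λ ↔ ∃ i j : ℤ, r ᵥ* (W * V) = ![i * g, j * (a' * b' * g)] := by
    intro r
    rw [hmem]
    constructor
    · rintro ⟨α, β, h⟩
      refine ⟨α * a' * x + β * b' * y, β - α, ?_⟩
      rw [h, hT, Matrix.vecMul_vecMul, ← mul_assoc, hTW, one_mul, haa, hbb]
      ext i
      fin_cases i <;> simp [V, Matrix.vecMul, dotProduct, Fin.sum_univ_two] <;> ring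
    · rintro ⟨i, j, h⟩
      refine ⟨i - j * b' * y, i - j * b' * y + j, ?_⟩
      have h2 := congrArg (fun v => v ᵥ* (U * T)) h
      rw [Matrix.vecMul_vecMul, mul_assoc, ← mul_assoc V, hVU, one_mul, hWT, Matrix.vecMul_one] at h2
      rw [h2, hT, ← Matrix.vecMul_vecMul, haa, hbb]
      congr 1
      ext k
      fin_cases k <;> simp [U, Matrix.vecMul, dotProduct, Fin.sum_univ_two]
      · ring
      · linear_combination (j * b' * g) * hxy
  refine ⟨W * V, U * T, ?_, g, |a' * b'|, hg, abs_pos.2 (mul_ne_zero ha' hb'), fun r => ?_⟩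
  · rw [mul_assoc, ← mul_assoc V, hVU, one_mul, hWT]
  · rw [key]
    rcases abs_choice (a' * b') with h | h
    · rw [h]
    · rw [h]
      constructor
      · rintro ⟨i, j, h⟩
        exact ⟨i, -j, by rw [h]; congr 2; ring⟩
      · rintro ⟨i, j, h⟩
        exact ⟨i, -j, by rw [h]; congr 2; ring⟩

def FC (φ : AffT) : Prop := ∀ Φ w, HasForm φ Φ w → Φ 1 0 = 0 ∧ Φ 2 0 = 0

def NM (a b : ℝ) : Matrix (Fin 3) (Fin 3) ℝ := !![1, a, b; 0, 1, 0; 0, 0, 1]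

theorem NM_mul (a b c d : ℝ) : NM a b * NM c d = NM (a + c) (b + d) := by
  ext i j
  fin_cases i <;> fin_cases j <;> simp [NM, Matrix.mul_apply, Fin.sum_univ_three] <;> ring

theorem NM_inj {a b c d : ℝ} (h : NM a b = NM c d) : a = c ∧ b = d := by
  have h1 := congrFun (congrFun h 0) 1
  have h2 := congrFun (congrFun h 0) 2
  simp [NM] at h1 h2
  exact ⟨h1, h2⟩

theorem NM_zero : NM 0 0 = 1 := by
  ext i j
  fin_cases i <;> fin_cases j <;> simp [NM]

theorem FC_data {φ : AffT} (hF : FC φ) : ∃ Φ w, HasForm φ Φ w ∧ Φ 1 0 = 0 ∧ Φ 2 0 = 0 ∧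
    Φ 0 0 ≠ 0 ∧ Φ 1 1 * Φ 2 2 - Φ 1 2 * Φ 2 1 ≠ 0 := by
  obtain ⟨Φ, w, hφ, hd⟩ := exists_form_unit φ
  obtain ⟨h1, h2⟩ := hF Φ w hφ
  refine ⟨Φ, w, hφ, h1, h2, ?_, ?_⟩ <;>
  · intro h
    apply hd
    rw [Matrix.det_fin_three, h1, h2]
    first
    | linear_combination (Φ 1 1 * Φ 2 2 - Φ 1 2 * Φ 2 1) * h
    | linear_combination Φ 0 0 * h

theorem solve2 {a b c d x y : ℝ} (hd : a * d - b * c ≠ 0) (h1 : a * x + b * y = 0)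
    (h2 : c * x + d * y = 0) : x = 0 ∧ y = 0 := by
  constructor
  · apply (mul_eq_zero.1 (?_ : x * (a * d - b * c) = 0)).resolve_right hd
    linear_combination d * h1 - b * h2
  · apply (mul_eq_zero.1 (?_ : y * (a * d - b * c) = 0)).resolve_right hd
    linear_combination a * h2 - c * h1

theorem form_struct {lam : ℝ} {φ γ : AffT} (hF : FC φ) {s t u : ℝ} (h : RI lam φ γ s t u)
    {B : Matrix (Fin 3) (Fin 3) ℝ} {v : E3} (hB : HasForm γ B v) :
    B 0 0 = 1 ∧ B 1 0 = 0 ∧ B 2 0 = 0 := by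
  obtain ⟨Φ, w, hφ, h1, h2, h3, h4⟩ := FC_data hF
  have hm := h.mat hφ hB
  have m0 := congrFun (congrFun hm 0) 0
  have m1 := congrFun (congrFun hm 1) 0
  have m2 := congrFun (congrFun hm 2) 0
  simp [MI, Matrix.mul_apply, Fin.sum_univ_three, h1, h2] at m0 m1 m2
  obtain ⟨k1, k2⟩ := solve2 h4 m1 m2
  refine ⟨?_, k1, k2⟩
  rw [k1, k2] at m0
  apply mul_left_cancel₀ h3
  linear_combination m0

theorem form_nu {lam : ℝ} {φ γ : AffT} (hF : FC φ) {t u : ℝ} (h : RI lam φ γ 0 t u)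
    {B : Matrix (Fin 3) (Fin 3) ℝ} {v : E3} (hB : HasForm γ B v) :
    B = NM (B 0 1) (B 0 2) := by
  obtain ⟨Φ, w, hφ, h1, h2, h3, h4⟩ := FC_data hF
  obtain ⟨k0, k1, k2⟩ := form_struct hF h hB
  have hm := h.mat hφ hB
  have m11 := congrFun (congrFun hm 1) 1
  have m12 := congrFun (congrFun hm 1) 2
  have m21 := congrFun (congrFun hm 2) 1
  have m22 := congrFun (congrFun hm 2) 2
  simp [MI, Matrix.mul_apply, Fin.sum_univ_three, h1, h2] at m11 m12 m21 m22
  obtain ⟨a1, a2⟩ := solve2 (x := B 1 1 - 1) (y := B 2 1) h4 (by linarith) (by linarith)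
  obtain ⟨b1, b2⟩ := solve2 (x := B 1 2) (y := B 2 2 - 1) h4 (by linarith) (by linarith)
  ext i j
  fin_cases i <;> fin_cases j <;> simp [NM, k0, k1, k2, a2, b1] <;> linarith

theorem form_nu_eq {lam : ℝ} {φ γ : AffT} {Φ : Matrix (Fin 3) (Fin 3) ℝ} {w : E3}
    (hφ : HasForm φ Φ w)
    {t u a b : ℝ} (h : RI lam φ γ 0 t u) {v : E3} (hB : HasForm γ (NM a b) v) :
    Φ 0 0 * a = lam * (u * Φ 1 1 + t * Φ 2 1) ∧ Φ 0 0 * b = lam * (u * Φ 1 2 + t * Φ 2 2) := by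
  have hm := h.mat hφ hB
  have m1 := congrFun (congrFun hm 0) 1
  have m2 := congrFun (congrFun hm 0) 2
  simp [MI, NM, Matrix.mul_apply, Fin.sum_univ_three] at m1 m2
  constructor
  · linear_combination m1
  · linear_combination m2

theorem lin_one {lam : ℝ} (hlam : lam ≠ 0) {φ γ : AffT} {s t u : ℝ} (h : RI lam φ γ s t u)
    {v : E3} (hB : HasForm γ 1 v) : s = 0 ∧ t = 0 ∧ u = 0 := by
  obtain ⟨Φ, w, hφ, hd⟩ := exists_form_unit φ
  have hm := h.mat hφ hB
  have hu : IsUnit Φ.det := isUnit_iff_ne_zero.2 hd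
  have h2 : MI lam s t u = 1 := by
    have := congrArg (fun X => X * Φ⁻¹) hm
    simpa [mul_assoc, Matrix.mul_nonsing_inv _ hu] using this.symm
  have m1 := congrFun (congrFun h2 0) 1
  have m2 := congrFun (congrFun h2 0) 2
  have m3 := congrFun (congrFun h2 1) 1
  simp [MI, hlam] at m1 m2 m3
  exact ⟨m3, m2, m1⟩

theorem Sys.step1 {lam : ℝ} (hlam : lam ≠ 0) {Γ : Subgroup AffT} {φ : AffT}
    (S : Sys lam Γ φ) :
    ∃ P P' : Matrix (Fin 3) (Fin 3) ℤ, P * P' = 1 ∧ ∃ ψ : AffT,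
      HasForm ψ (P.map (Int.cast : ℤ → ℝ)) 0 ∧ HasForm ψ⁻¹ (P'.map (Int.cast : ℤ → ℝ)) 0 ∧
      FC (φ * ψ⁻¹) := by
  obtain ⟨ν, hν, ν', hν', t, u, t', u', h, h', hd⟩ := S.ind
  obtain ⟨B, -, v, hB⟩ := S.hint ν hν
  have hB1 : B ≠ 1 := by
    rintro rfl
    rw [Matrix.map_one _ Int.cast_zero Int.cast_one] at hB
    obtain ⟨-, rfl, rfl⟩ := lin_one hlam h hB
    simp at hd
  have : ∃ j, (fun i => (B - 1) i j) ≠ 0 := by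
    by_contra! hc
    apply hB1
    rw [← sub_eq_zero]
    ext i j
    exact congrFun (hc j) i
  obtain ⟨j, hj⟩ := this
  obtain ⟨P, P', hP, d, hd0, hPc⟩ := lemA _ hj
  obtain ⟨ψ, hψ, hψ'⟩ := mk_aff _ _ (map_one_int hP)
  refine ⟨P, P', hP, ψ, hψ, hψ', ?_⟩
  intro Φ' w' hΦ'
  obtain ⟨Φ, w, hφ⟩ := exists_form φ
  have e1 := (hΦ'.eq (hφ.mul hψ')).1
  have hm := h.mat hφ hB
  have hc : (fun i => (B - 1) i j) = P' *ᵥ ![d, 0, 0] := by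
    rw [← hPc, Matrix.mulVec_mulVec, mul_eq_one_comm.mp hP, Matrix.one_mulVec]
  have hci : ∀ i, (d : ℝ) * (P' i 0 : ℝ) = (B i j : ℝ) - (if i = j then (1 : ℝ) else 0) := by
    intro i
    have := congrFun hc i
    simp [Matrix.mulVec, dotProduct, Fin.sum_univ_three, Matrix.one_apply] at this
    have h2 := congrArg (Int.cast : ℤ → ℝ) this
    push_cast at h2
    linarith
  have hd0' : (d : ℝ) ≠ 0 := by exact_mod_cast hd0
  have m1 := congrFun (congrFun hm 1) j
  have m2 := congrFun (congrFun hm 2) j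
  have c0 := hci 0
  have c1 := hci 1
  have c2 := hci 2
  rw [e1]
  simp [MI, Matrix.mul_apply, Fin.sum_univ_three] at m1 m2 ⊢
  constructor
  · apply mul_left_cancel₀ hd0'
    have : d * (Φ 1 0 * P' 0 0 + Φ 1 1 * P' 1 0 + Φ 1 2 * P' 2 0) =
      Φ 1 0 * (d * P' 0 0) + Φ 1 1 * (d * P' 1 0) + Φ 1 2 * (d * P' 2 0) := by ring
    rw [this, c0, c1, c2]
    fin_cases j <;> simp at m1 ⊢ <;> linarith
  · apply mul_left_cancel₀ hd0'
    have : d * (Φ 2 0 * P' 0 0 + Φ 2 1 * P' 1 0 + Φ 2 2 * P' 2 0) =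
      Φ 2 0 * (d * P' 0 0) + Φ 2 1 * (d * P' 1 0) + Φ 2 2 * (d * P' 2 0) := by ring
    rw [this, c0, c1, c2]
    fin_cases j <;> simp at m2 ⊢ <;> linarith

def bd (Q : Matrix (Fin 2) (Fin 2) ℤ) : Matrix (Fin 3) (Fin 3) ℤ :=
  !![1, 0, 0; 0, Q 0 0, Q 0 1; 0, Q 1 0, Q 1 1]

theorem bd_mul {Q Q' : Matrix (Fin 2) (Fin 2) ℤ} (h : Q * Q' = 1) : bd Q * bd Q' = 1 := by
  have h00 := congrFun (congrFun h 0) 0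
  have h01 := congrFun (congrFun h 0) 1
  have h10 := congrFun (congrFun h 1) 0
  have h11 := congrFun (congrFun h 1) 1
  simp [Matrix.mul_apply, Fin.sum_univ_two] at h00 h01 h10 h11
  ext i j
  fin_cases i <;> fin_cases j <;> simp [bd, Matrix.mul_apply, Fin.sum_univ_three, h00, h01, h10, h11]

theorem bd_conj {Q Q' : Matrix (Fin 2) (Fin 2) ℤ} (h : Q * Q' = 1) (r q : Fin 2 → ℤ)
    (hq : r ᵥ* Q = q) :
    (bd Q').map (Int.cast : ℤ → ℝ) * NM (r 0) (r 1) * (bd Q).map (Int.cast : ℤ → ℝ)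
      = NM (q 0) (q 1) := by
  have e : (NM (r 0) (r 1)) = (!![1, r 0, r 1; 0, 1, 0; 0, 0, 1]).map (Int.cast : ℤ → ℝ) := by
    ext i j
    fin_cases i <;> fin_cases j <;> simp [NM]
  have e' : (NM (q 0) (q 1)) = (!![1, q 0, q 1; 0, 1, 0; 0, 0, 1]).map (Int.cast : ℤ → ℝ) := by
    ext i j
    fin_cases i <;> fin_cases j <;> simp [NM]
  rw [e, e', map_mul_int, map_mul_int]
  congr 1
  have h' := mul_eq_one_comm.mp h
  have h00 := congrFun (congrFun h' 0) 0
  have h01 := congrFun (congrFun h' 0) 1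
  have h10 := congrFun (congrFun h' 1) 0
  have h11 := congrFun (congrFun h' 1) 1
  simp [Matrix.mul_apply, Fin.sum_univ_two] at h00 h01 h10 h11
  rw [← hq]
  ext i j
  fin_cases i <;> fin_cases j <;>
    simp [bd, Matrix.mul_apply, Fin.sum_univ_three, h00, h01, h10, h11, Matrix.vecMul, dotProduct]

theorem Sys.form_int {lam : ℝ} {Γ : Subgroup AffT} {φ : AffT}
    (S : Sys lam Γ φ) (hF : FC φ) {ν : AffT} (hν : ν ∈ Γ) {t u : ℝ} (h : RI lam φ ν 0 t u) :
    ∃ r : Fin 2 → ℤ, ∃ v, HasForm ν (NM (r 0) (r 1)) v := by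
  obtain ⟨B, -, v, hB⟩ := S.hint ν hν
  have := form_nu hF h hB
  rw [this] at hB
  exact ⟨![B 0 1, B 0 2], v, by simpa using hB⟩

theorem Sys.step2 {lam : ℝ} (hlam : lam ≠ 0) {Γ : Subgroup AffT} {φ : AffT}
    (S : Sys lam Γ φ) (hF : FC φ) :
    ∃ P P' : Matrix (Fin 3) (Fin 3) ℤ, P * P' = 1 ∧ ∃ ψ : AffT,
      HasForm ψ (P.map (Int.cast : ℤ → ℝ)) 0 ∧ HasForm ψ⁻¹ (P'.map (Int.cast : ℤ → ℝ)) 0 ∧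
      FC (φ * ψ⁻¹) ∧ ∃ a₁ n : ℤ, 0 < a₁ ∧ 0 < n ∧
        (∀ ν ∈ Subgroup.map (MulAut.conj ψ).toMonoidHom Γ, ∀ t u, RI lam (φ * ψ⁻¹) ν 0 t u →
          ∃ i j : ℤ, ∃ v, HasForm ν (NM (i * a₁ : ℤ) (j * (n * a₁) : ℤ)) v) ∧
        (∀ i j : ℤ, ∃ ν ∈ Subgroup.map (MulAut.conj ψ).toMonoidHom Γ, ∃ t u v,
          RI lam (φ * ψ⁻¹) ν 0 t u ∧ HasForm ν (NM (i * a₁ : ℤ) (j * (n * a₁) : ℤ)) v) := by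
  let Λ₀ : AddSubgroup (Fin 2 → ℤ) :=
    { carrier := {r | ∃ ν ∈ Γ, ∃ t u v, RI lam φ ν 0 t u ∧ HasForm ν (NM (r 0) (r 1)) v}
      zero_mem' := ⟨1, Γ.one_mem, 0, 0, 0, RI.one, by simpa [NM_zero] using HasForm.one⟩
      add_mem' := by
        rintro r r' ⟨ν, hν, t, u, v, h, hf⟩ ⟨ν', hν', t', u', v', h', hf'⟩
        have h1 := h.mul h'
        have h2 := hf.mul hf'
        rw [NM_mul] at h2
        rw [add_zero] at h1
        exact ⟨ν * ν', Γ.mul_mem hν hν', _, _, _, h1, by simpa using h2⟩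
      neg_mem' := by
        rintro r ⟨ν, hν, t, u, v, h, hf⟩
        obtain ⟨s', t', u', h'⟩ := S.hR ν⁻¹ (Γ.inv_mem hν)
        have hs := h.s_inv h'
        rw [neg_zero] at hs
        subst hs
        obtain ⟨r', v', hf'⟩ := S.form_int hF (Γ.inv_mem hν) h'
        have h2 := hf.mul hf'
        rw [NM_mul, mul_inv_cancel] at h2
        have h3 := (h2.eq HasForm.one).1
        rw [← NM_zero] at h3
        obtain ⟨k1, k2⟩ := NM_inj h3
        refine ⟨ν⁻¹, Γ.inv_mem hν, t', u', v', h', ?_⟩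
        have e1 : (((-r) 0 : ℤ) : ℝ) = r' 0 := by push_cast [Pi.neg_apply]; linarith
        have e2 : (((-r) 1 : ℤ) : ℝ) = r' 1 := by push_cast [Pi.neg_apply]; linarith
        rw [e1, e2]; exact hf' }
  have hΛ : ∀ r, r ∈ AddSubgroup.toIntSubmodule Λ₀ ↔
      ∃ ν ∈ Γ, ∃ t u v, RI lam φ ν 0 t u ∧ HasForm ν (NM (r 0) (r 1)) v := fun r => Iff.rfl
  obtain ⟨ν, hν, ν', hν', t, u, t', u', h, h', hd⟩ := S.ind
  obtain ⟨r, v, hf⟩ := S.form_int hF hν h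
  obtain ⟨r', v', hf'⟩ := S.form_int hF hν' h'
  obtain ⟨Φ, w, hφ, g1, g2, g3, g4⟩ := FC_data hF
  have hdet : r 0 * r' 1 - r 1 * r' 0 ≠ 0 := by
    intro h0
    have h0' : (r 0 : ℝ) * r' 1 - r 1 * r' 0 = 0 := by exact_mod_cast h0
    obtain ⟨p1, p2⟩ := form_nu_eq hφ h hf
    obtain ⟨p1', p2'⟩ := form_nu_eq hφ h' hf'
    have : lam * lam * (t * u' - t' * u) * (Φ 1 1 * Φ 2 2 - Φ 1 2 * Φ 2 1) = 0 := by
      have e : Φ 0 0 * Φ 0 0 * ((r 0 : ℝ) * r' 1 - r 1 * r' 0) =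
        (Φ 0 0 * r 0) * (Φ 0 0 * r' 1) - (Φ 0 0 * r 1) * (Φ 0 0 * r' 0) := by ring
      rw [h0', p1, p2, p1', p2'] at e
      linear_combination e
    exact (mul_ne_zero (mul_ne_zero (mul_ne_zero hlam hlam) hd) g4) this
  obtain ⟨Q, Q', hQ, a₁, n, ha, hn, hmem⟩ := lemB (AddSubgroup.toIntSubmodule Λ₀) r r'
    ((hΛ r).2 ⟨ν, hν, t, u, v, h, hf⟩) ((hΛ r').2 ⟨ν', hν', t', u', v', h', hf'⟩) hdet
  have hP : bd Q' * bd Q = 1 := bd_mul (mul_eq_one_comm.mp hQ)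
  obtain ⟨ψ, hψ, hψ'⟩ := mk_aff _ _ (map_one_int hP)
  refine ⟨bd Q', bd Q, hP, ψ, hψ, hψ', ?_, a₁, n, ha, hn, ?_, ?_⟩
  · intro Φ' w' hΦ'
    rw [(hΦ'.eq (hφ.mul hψ')).1]
    simp [Matrix.mul_apply, Fin.sum_univ_three, bd, g1, g2]
  · rintro _ ⟨ν, hν, rfl⟩ t u hR
    have hR' : RI lam φ ν 0 t u := (RI_conj ψ).1 hR
    obtain ⟨r, v, hf⟩ := S.form_int hF hν hR'
    obtain ⟨i, j, hij⟩ := (hmem r).1 ((hΛ r).2 ⟨ν, hν, t, u, v, hR', hf⟩)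
    have h2 := (hψ.mul hf).mul hψ'
    rw [bd_conj hQ r _ hij] at h2
    exact ⟨i, j, _, h2⟩
  · intro i j
    have hij : (![i * a₁, j * (n * a₁)] ᵥ* Q') ᵥ* Q = ![i * a₁, j * (n * a₁)] := by
      rw [Matrix.vecMul_vecMul, mul_eq_one_comm.mp hQ, Matrix.vecMul_one]
    obtain ⟨ν, hν, t, u, v, hR, hf⟩ := (hΛ _).1 ((hmem _).2 ⟨i, j, hij⟩)
    have h2 := (hψ.mul hf).mul hψ'
    rw [bd_conj hQ _ _ hij] at h2
    exact ⟨ψ * ν * ψ⁻¹, Subgroup.mem_map_of_mem (MulAut.conj ψ).toMonoidHom hν, t, u, _,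
      (RI_conj ψ).2 hR, h2⟩

theorem Sys.step3 {lam : ℝ} (hlam : lam ≠ 0) {Γ : Subgroup AffT} {φ : AffT}
    (S : Sys lam Γ φ) (hF : FC φ) {a₁ n : ℤ} (ha : 0 < a₁) (hn : 0 < n)
    (hA : ∀ ν ∈ Γ, ∀ t u, RI lam φ ν 0 t u →
          ∃ i j : ℤ, ∃ v, HasForm ν (NM (i * a₁ : ℤ) (j * (n * a₁) : ℤ)) v)
    (hB : ∀ i j : ℤ, ∃ ν ∈ Γ, ∃ t u v,
          RI lam φ ν 0 t u ∧ HasForm ν (NM (i * a₁ : ℤ) (j * (n * a₁) : ℤ)) v) :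
    ∃ p q a b c d : ℤ, ∃ (v₁ v₂ v₃ : E3) (g h₁ h₂ : AffT),
          HasForm g !![1, (p : ℝ), (q : ℝ); 0, (a : ℝ), (b : ℝ); 0, (c : ℝ), (d : ℝ)] v₁ ∧
          HasForm h₁ !![1, (a₁ : ℝ), 0; 0, 1, 0; 0, 0, 1] v₂ ∧
          HasForm h₂ !![1, 0, ((n * a₁ : ℤ) : ℝ); 0, 1, 0; 0, 0, 1] v₃ ∧
          Γ = Subgroup.closure {g, h₁, h₂} ∧
          ∃ A : Matrix (Fin 2) (Fin 2) ℤ, A.det = 1 ∧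
            !![a₁, 0; 0, n * a₁] * !![a, b; c, d] = A * !![a₁, 0; 0, n * a₁] := by
  obtain ⟨g, hg, s₀, t₀, u₀, hgR, hgen⟩ := S.gen
  obtain ⟨G, -, v₁, hG⟩ := S.hint g hg
  obtain ⟨h₁, hh₁, t1, u1, v₂, hR₁, hf₁⟩ := hB 1 0
  obtain ⟨h₂, hh₂, t2, u2, v₃, hR₂, hf₂⟩ := hB 0 1
  obtain ⟨k0, k1, k2⟩ := form_struct hF hgR hG
  simp only [Matrix.map_apply] at k0 k1 k2
  have hG' : G.map (Int.cast : ℤ → ℝ) = !![1, (G 0 1 : ℝ), (G 0 2 : ℝ);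
      0, (G 1 1 : ℝ), (G 1 2 : ℝ); 0, (G 2 1 : ℝ), (G 2 2 : ℝ)] := by
    ext i j
    fin_cases i <;> fin_cases j <;> simp [k0, k1, k2]
  have hdetG : G 1 1 * G 2 2 - G 1 2 * G 2 1 = 1 := by
    have := sub_det hgR hG
    rw [hG', Matrix.det_fin_three] at this
    simp at this
    exact_mod_cast this
  -- normalization
  have hnorm : ∀ h ∈ Γ, ∀ t u v (x y : ℤ), RI lam φ h 0 t u → HasForm h (NM x y) v →
      ∃ i j : ℤ, x * G 1 1 + y * G 2 1 = i * a₁ ∧ x * G 1 2 + y * G 2 2 = j * (n * a₁) := by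
    intro h hh t u v x y hR hf
    have hmem : g⁻¹ * h * g ∈ Γ := Γ.mul_mem (Γ.mul_mem (Γ.inv_mem hg) hh) hg
    obtain ⟨s', t', u', hR'⟩ := S.hR _ hmem
    have e : g * (g⁻¹ * h * g) = h * g := by group
    have r1 := hgR.mul hR'
    have r2 := hR.mul hgR
    rw [e] at r1
    have hs := (r1.uniq r2).1
    have hs' : s' = 0 := by linarith
    subst hs'
    obtain ⟨i, j, v', hf'⟩ := hA _ hmem t' u' hR'
    have f1 := hG.mul hf'
    have f2 := hf.mul hG
    rw [e] at f1
    have f := (f1.eq f2).1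
    rw [hG'] at f
    have m1 := congrFun (congrFun f 0) 1
    have m2 := congrFun (congrFun f 0) 2
    simp [NM, Matrix.mul_apply, Fin.sum_univ_three] at m1 m2
    refine ⟨i, j, ?_, ?_⟩
    · have : (x : ℝ) * G 1 1 + y * G 2 1 = i * a₁ := by linarith
      exact_mod_cast this
    · have : (x : ℝ) * G 1 2 + y * G 2 2 = j * (n * a₁) := by linarith
      exact_mod_cast this
  refine ⟨G 0 1, G 0 2, G 1 1, G 1 2, G 2 1, G 2 2, v₁, v₂, v₃, g, h₁, h₂, ?_, ?_, ?_, ?_, ?_⟩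
  · rw [← hG']; exact hG
  · simpa [NM] using hf₁
  · simpa [NM] using hf₂
  · apply le_antisymm
    · intro γ hγ
      have mg : g ∈ Subgroup.closure {g, h₁, h₂} := Subgroup.subset_closure (by simp)
      have m1 : h₁ ∈ Subgroup.closure {g, h₁, h₂} := Subgroup.subset_closure (by simp)
      have m2 : h₂ ∈ Subgroup.closure {g, h₁, h₂} := Subgroup.subset_closure (by simp)
      obtain ⟨s, t, u, hR⟩ := S.hR γ hγ
      obtain ⟨k, hk⟩ := hgen γ hγ s t u hR
      obtain ⟨tk, uk, hRk⟩ := RI.zpow_s S.hR hg hgR k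
      have hν : γ * (g ^ k)⁻¹ ∈ Γ := Γ.mul_mem hγ (Γ.inv_mem (Γ.zpow_mem hg k))
      obtain ⟨s', t', u', h'⟩ := S.hR _ hν
      have h6 := h'.mul hRk
      rw [inv_mul_cancel_right] at h6
      have h7 := (h6.uniq hR).1
      have hs' : s' = 0 := by linarith
      subst hs'
      obtain ⟨i, j, v, hf⟩ := hA _ hν t' u' h'
      have hpow : ∀ (h : AffT) (x y : ℝ) (v : E3), HasForm h (NM x y) v → ∀ i : ℤ,
          ∃ v, HasForm (h ^ i) (NM (i * x) (i * y)) v := by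
        intro h x y v hf i
        have hn : ∀ m : ℕ, ∃ v, HasForm (h ^ m) (NM (m * x) (m * y)) v := by
          intro m
          induction m with
          | zero => exact ⟨0, by simpa [NM_zero] using HasForm.one⟩
          | succ m ih =>
            obtain ⟨v', ih⟩ := ih
            have := ih.mul hf
            rw [← pow_succ, NM_mul] at this
            refine ⟨(NM (m * x) (m * y)) *ᵥ v + v', ?_⟩
            convert this using 2 <;> push_cast <;> ring
        obtain ⟨m, rfl | rfl⟩ := i.eq_nat_or_neg
        · simpa using hn m
        · obtain ⟨v', h1⟩ := hn m
          obtain ⟨C, w, h2⟩ := exists_form (h ^ m)⁻¹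
          have h3 := h1.mul h2
          rw [mul_inv_cancel] at h3
          have h4 := (h3.eq HasForm.one).1
          have h5 : C = NM (-(m * x)) (-(m * y)) := by
            have h6 : NM (-(m * x)) (-(m * y)) * NM (m * x) (m * y) = 1 := by
              rw [NM_mul, ← NM_zero]; congr 1 <;> ring
            calc C = (NM (-(m * x)) (-(m * y)) * NM (m * x) (m * y)) * C := by rw [h6, one_mul]
              _ = _ := by rw [mul_assoc, h4, mul_one]
          rw [h5] at h2
          exact ⟨w, by simpa using h2⟩
      obtain ⟨w1, p1⟩ := hpow _ _ _ _ hf₁ i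
      obtain ⟨w2, p2⟩ := hpow _ _ _ _ hf₂ j
      have p3 := p1.mul p2
      rw [NM_mul] at p3
      have hH : h₁ ^ i * h₂ ^ j ∈ Γ := Γ.mul_mem (Γ.zpow_mem hh₁ i) (Γ.zpow_mem hh₂ j)
      have hHc : h₁ ^ i * h₂ ^ j ∈ Subgroup.closure {g, h₁, h₂} :=
        Subgroup.mul_mem _ (Subgroup.zpow_mem _ m1 i) (Subgroup.zpow_mem _ m2 j)
      set H := h₁ ^ i * h₂ ^ j
      set ν := γ * (g ^ k)⁻¹ with hνdef
      have hδ : H⁻¹ * ν ∈ Γ := Γ.mul_mem (Γ.inv_mem hH) hν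
      obtain ⟨C, w, hC⟩ := exists_form (H⁻¹ * ν)
      have q1 := p3.mul hC
      rw [mul_inv_cancel_left] at q1
      have q2 := (q1.eq hf).1
      have q3 : C = 1 := by
        have e1 : NM (i * ((1 * a₁ : ℤ) : ℝ) + j * ((0 * a₁ : ℤ) : ℝ))
            (i * ((0 * (n * a₁) : ℤ) : ℝ) + j * ((1 * (n * a₁) : ℤ) : ℝ)) =
            NM (i * a₁ : ℤ) (j * (n * a₁) : ℤ) := by
          congr 1 <;> push_cast <;> ring
        rw [e1] at q2
        have h6 : NM (-(i * a₁ : ℤ)) (-(j * (n * a₁) : ℤ)) * NM (i * a₁ : ℤ) (j * (n * a₁) : ℤ)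
            = 1 := by
          rw [NM_mul, ← NM_zero]; congr 1 <;> ring
        calc C = (NM (-(i * a₁ : ℤ)) (-(j * (n * a₁) : ℤ)) *
              NM (i * a₁ : ℤ) (j * (n * a₁) : ℤ)) * C := by rw [h6, one_mul]
          _ = 1 := by rw [mul_assoc, q2, h6]
      rw [q3] at hC
      obtain ⟨sd, td, ud, hRd⟩ := S.hR _ hδ
      obtain ⟨rfl, rfl, rfl⟩ := lin_one hlam hRd hC
      have hone := hRd.eq_one
      have hνH : ν = H := (inv_mul_eq_one.1 hone).symm
      have : γ = H * g ^ k := by rw [← hνH, hνdef, inv_mul_cancel_right]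
      rw [this]
      exact Subgroup.mul_mem _ hHc (Subgroup.zpow_mem _ mg k)
    · rw [Subgroup.closure_le]
      rintro x (rfl | rfl | rfl) <;> assumption
  · obtain ⟨i, j, e1, e2⟩ := hnorm h₁ hh₁ _ _ _ _ _ hR₁ hf₁
    obtain ⟨i', j', e1', e2'⟩ := hnorm h₂ hh₂ _ _ _ _ _ hR₂ hf₂
    have hM : !![a₁, 0; 0, n * a₁] * !![G 1 1, G 1 2; G 2 1, G 2 2] =
        !![i, j; i', j'] * !![a₁, 0; 0, n * a₁] := by
      ext r s
      fin_cases r <;> fin_cases s <;> simp [Matrix.mul_apply, Fin.sum_univ_two] <;> linarith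
    refine ⟨!![i, j; i', j'], ?_, hM⟩
    have hdet := congrArg Matrix.det hM
    rw [Matrix.det_mul, Matrix.det_mul, mul_comm] at hdet
    have hD : (!![a₁, 0; 0, n * a₁] : Matrix (Fin 2) (Fin 2) ℤ).det ≠ 0 := by
      rw [Matrix.det_fin_two_of]; simp
      exact ⟨ha.ne', hn.ne', ha.ne'⟩
    have h3 := mul_right_cancel₀ hD hdet
    rw [← h3, Matrix.det_fin_two_of]
    exact hdetG

/-- normal form of an integral affine group conjugate to a discrete subgroup of
`I_λ` with `λ ≠ 0` and compact quotient. -/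
theorem stmt_17 (lam : ℝ) (hlam : lam ≠ 0) (Γ : Subgroup AffT)
    (hint : ∀ γ ∈ Γ, ∃ B : Matrix (Fin 3) (Fin 3) ℤ, IsUnit B ∧
      ∃ v : E3, HasForm γ (B.map (Int.cast : ℤ → ℝ)) v)
    (φ : AffT)
    (hconj : ∀ γ ∈ Subgroup.map (MulAut.conj φ).toMonoidHom Γ,
      ∃ s t u : ℝ, ∀ x, γ x = Ifam lam s t u x)
    (hdisc : DiscreteTopology
      {p : ℝ × ℝ × ℝ | ∃ γ ∈ Subgroup.map (MulAut.conj φ).toMonoidHom Γ,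
        ∀ x, γ x = Ifam lam p.1 p.2.1 p.2.2 x})
    (hcomp : HasCompactQuotient Γ) :
    ∃ P : Matrix (Fin 3) (Fin 3) ℤ, IsUnit P ∧ ∃ (w : E3) (ψ : AffT),
      (∀ x, ψ x = (P.map (Int.cast : ℤ → ℝ)).mulVec x + w) ∧
      ∃ p q a b c d a₁ n : ℤ, 0 < a₁ ∧ 0 < n ∧
        ∃ (v₁ v₂ v₃ : E3) (g h₁ h₂ : AffT),
          HasForm g !![1, (p : ℝ), (q : ℝ); 0, (a : ℝ), (b : ℝ); 0, (c : ℝ), (d : ℝ)] v₁ ∧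
          HasForm h₁ !![1, (a₁ : ℝ), 0; 0, 1, 0; 0, 0, 1] v₂ ∧
          HasForm h₂ !![1, 0, ((n * a₁ : ℤ) : ℝ); 0, 1, 0; 0, 0, 1] v₃ ∧
          Subgroup.map (MulAut.conj ψ).toMonoidHom Γ = Subgroup.closure {g, h₁, h₂} ∧
          ∃ A : Matrix (Fin 2) (Fin 2) ℤ, A.det = 1 ∧
            !![a₁, 0; 0, n * a₁] * !![a, b; c, d] = A * !![a₁, 0; 0, n * a₁] := by
  have S := mk_sys hint hconj hcomp
  obtain ⟨P₁, P₁', hP₁, ψ₁, hψ₁, hψ₁', hF₁⟩ := S.step1 hlam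
  have S₁ := S.conj hP₁ hψ₁ hψ₁'
  obtain ⟨P₂, P₂', hP₂, ψ₂, hψ₂, hψ₂', hF₂, a₁, n, ha, hn, hA, hB⟩ := S₁.step2 hlam hF₁
  have S₂ := S₁.conj hP₂ hψ₂ hψ₂'
  obtain ⟨p, q, a, b, c, d, v₁, v₂, v₃, g, h₁, h₂, f1, f2, f3, hcl, A, hA1, hA2⟩ :=
    S₂.step3 hlam hF₂ ha hn hA hB
  refine ⟨P₂ * P₁, (IsUnit.of_mul_eq_one _ hP₂).mul (IsUnit.of_mul_eq_one _ hP₁), 0, ψ₂ * ψ₁,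
    ?_, p, q, a, b, c, d, a₁, n, ha, hn, v₁, v₂, v₃, g, h₁, h₂, f1, f2, f3, ?_, A, hA1, hA2⟩
  · have := hψ₂.mul hψ₁
    rw [map_mul_int] at this
    intro x
    rw [this x]; simp
  · rw [← hcl, Subgroup.map_map]
    congr 1
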